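/- For all positive integers α, β, m, n, r, the congruence ∑_{k=0}^{n-1} [(k)_β·(k+β+1)_β]^r · [2(k+β)] · q^{(n-2β-k)(2βαm+1)} · ∏_{i=0}^{2β-1} w_{k+i}^{(α)}(x;q)^m ≡ 0 (mod [n]) holds in ℤ[q][x]. -/

import Mathlib

open Polynomial LaurentPolynomial

/-- The Gaussian binomial coefficient as a polynomial in `q` over `ℤ`. -/
noncomputable def qbinom : ℕ → ℕ → Polynomial ℤ
  | _, 0 => 1
  | 0, _ + 1 => 0
  | n + 1, k + 1 => qbinom n k + Polynomial.X ^ (k + 1) * qbinom n (k + 1)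

/-- The `q`-integer `[m] = 1 + q + ⋯ + q^{m-1}` in `ℤ[q]`. -/
noncomputable def qint (m : ℕ) : Polynomial ℤ := ∑ i ∈ Finset.range m, Polynomial.X ^ i

/-- The `q`-integer `[m]` as a Laurent polynomial in `q`. -/
noncomputable def qintL (m : ℕ) : LaurentPolynomial ℤ := (qint m).toLaurent

/-- `qbinom(k-1,j-1)·qbinom(k+j,j) − qbinom(k,j)·qbinom(k+j,j-1)`. -/
noncomputable def qwCoeff (k j : ℕ) : Polynomial ℤ :=
  qbinom (k - 1) (j - 1) * qbinom (k + j) j - qbinom k j * qbinom (k + j) (j - 1)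

/-- `w_k^{(α)}(x;q) = ∑_{j=1}^{k} q^{α(C(j+1,2)−(k+1)(j−1))} ·
(qbinom(k-1,j-1)·qbinom(k+j,j) − qbinom(k,j)·qbinom(k+j,j-1))^α · x^{j-1}`,
a polynomial in `x` with coefficients in `ℤ[q,q⁻¹]` (the exponent of `q` may be negative). -/
noncomputable def qw (α k : ℕ) : Polynomial (LaurentPolynomial ℤ) :=
  ∑ j ∈ Finset.Icc 1 k,
    Polynomial.C (LaurentPolynomial.T ((α : ℤ) * (((j + 1).choose 2 : ℤ) - ((k : ℤ) + 1) * ((j : ℤ) - 1))) *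
        ((qwCoeff k j).toLaurent) ^ α) *
      Polynomial.X ^ (j - 1)

/-- The Gaussian binomial coefficient evaluated at `q`. -/
noncomputable def qbinomAt {K : Type*} [Field K] (q : K) (n k : ℕ) : K :=
  Polynomial.eval₂ (Int.castRingHom K) q (qbinom n k)

/-- `∏_{i<k} (1 - q^{n-i})` for an integer `n`. -/
noncomputable def qdescAt {K : Type*} [Field K] (q : K) (n : ℤ) (k : ℕ) : K :=
  ∏ i ∈ Finset.range k, (1 - q ^ (n - i))

section Gaussian

variable {K : Type*} [Field K] {q : K}

lemma qbinom_zero_right (n : ℕ) : qbinom n 0 = 1 := by cases n <;> simp [qbinom]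

lemma qbinom_eq_zero_of_lt {n k : ℕ} (h : n < k) : qbinom n k = 0 := by
  induction n generalizing k with
  | zero =>
    obtain ⟨k, rfl⟩ : ∃ l, k = l + 1 := ⟨k - 1, by omega⟩
    simp [qbinom]
  | succ n ih =>
    obtain ⟨k, rfl⟩ : ∃ l, k = l + 1 := ⟨k - 1, by omega⟩
    simp [qbinom, ih (show n < k by omega), ih (show n < k + 1 by omega)]

lemma qbinomAt_zero_right (n : ℕ) : qbinomAt q n 0 = 1 := by
  simp [qbinomAt, qbinom_zero_right]

lemma qbinomAt_eq_zero_of_lt {n k : ℕ} (h : n < k) : qbinomAt q n k = 0 := by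
  simp [qbinomAt, qbinom_eq_zero_of_lt h]

lemma qbinomAt_succ_succ (n k : ℕ) :
    qbinomAt q (n + 1) (k + 1) = qbinomAt q n k + q ^ (k + 1) * qbinomAt q n (k + 1) := by
  simp [qbinomAt, qbinom, Polynomial.eval₂_add, Polynomial.eval₂_mul]

lemma qdescAt_succ (n : ℤ) (k : ℕ) :
    qdescAt q n (k + 1) = qdescAt q n k * (1 - q ^ (n - k)) := by
  simp [qdescAt, Finset.prod_range_succ]

lemma qdescAt_succ_succ (n : ℤ) (k : ℕ) :
    qdescAt q (n + 1) (k + 1) = (1 - q ^ (n + 1)) * qdescAt q n k := by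
  simp [qdescAt, Finset.prod_range_succ', mul_comm]

lemma qdescAt_self_ne_zero {d : ℕ} (hq : IsPrimitiveRoot q d) {k : ℕ} (hk : k < d) :
    qdescAt q k k ≠ 0 := by
  refine Finset.prod_ne_zero_iff.2 fun i hi => ?_
  have hi := Finset.mem_range.1 hi
  rw [← Nat.cast_sub hi.le, zpow_natCast, sub_ne_zero]
  exact (hq.pow_ne_one_of_pos_of_lt (by omega) (by omega)).symm

lemma qdescAt_self_mul_qbinomAt (hq : q ≠ 0) (n k : ℕ) :
    qdescAt q k k * qbinomAt q n k = qdescAt q n k := by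
  induction n generalizing k with
  | zero =>
    cases k with
    | zero => simp [qdescAt, qbinomAt_zero_right]
    | succ k =>
      simp [qbinomAt_eq_zero_of_lt (Nat.succ_pos k), qdescAt, Finset.prod_range_succ']
  | succ n ih =>
    cases k with
    | zero => simp [qdescAt, qbinomAt_zero_right]
    | succ k =>
      have h1 := ih k
      have h2 := ih (k + 1)
      rw [qbinomAt_succ_succ]
      push_cast at h2 ⊢
      rw [mul_add, mul_left_comm, h2, qdescAt_succ_succ, qdescAt_succ, mul_assoc, h1,
        qdescAt_succ_succ, zpow_sub₀ hq]
      have hk : q ^ k ≠ 0 := pow_ne_zero _ hq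
      simp only [zpow_add₀ hq, zpow_natCast, zpow_one]
      field_simp
      ring

lemma qbinomAt_order_eq_zero {d : ℕ} (hq : IsPrimitiveRoot q d) {k : ℕ} (hk0 : 0 < k)
    (hk : k < d) : qbinomAt q d k = 0 := by
  have h := qdescAt_self_mul_qbinomAt (hq.ne_zero (by omega)) d k
  have h0 : qdescAt q d k = 0 :=
    Finset.prod_eq_zero (Finset.mem_range.2 hk0) (by simp [hq.pow_eq_one])
  rw [h0] at h
  exact (mul_eq_zero.1 h).resolve_left (qdescAt_self_ne_zero hq hk)

lemma qbinomAt_self (n : ℕ) : qbinomAt q n n = 1 := by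
  induction n with
  | zero => exact qbinomAt_zero_right 0
  | succ n ih => rw [qbinomAt_succ_succ, ih, qbinomAt_eq_zero_of_lt (Nat.lt_succ_self n)]; simp

lemma qbinomAt_add_order {d : ℕ} (hd : 0 < d) (hq : IsPrimitiveRoot q d) (n k : ℕ) :
    qbinomAt q (n + d) k = qbinomAt q n k + if d ≤ k then qbinomAt q n (k - d) else 0 := by
  induction n generalizing k with
  | zero =>
    rcases Nat.eq_zero_or_pos k with rfl | hk
    · simp [qbinomAt_zero_right, hd.ne']
    rw [qbinomAt_eq_zero_of_lt hk, zero_add]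
    rcases lt_trichotomy k d with h | rfl | h
    · simp [qbinomAt_order_eq_zero hq hk h, h.not_ge]
    · simp [qbinomAt_self]
    · rw [qbinomAt_eq_zero_of_lt h, qbinomAt_eq_zero_of_lt (show 0 < k - d by omega)]
      simp
  | succ n ih =>
    cases k with
    | zero => simp [qbinomAt_zero_right, hd.ne']
    | succ k =>
      rw [show n + 1 + d = (n + d) + 1 by ring, qbinomAt_succ_succ, qbinomAt_succ_succ, ih, ih]
      rcases lt_trichotomy (k + 1) d with h | h | h
      · simp [h.not_ge, show ¬ d ≤ k by omega]
      · rw [if_neg (show ¬ d ≤ k by omega), if_pos h.ge, if_pos h.ge, h, hq.pow_eq_one]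
        simp [qbinomAt_zero_right]
        ring
      · rw [if_pos (show d ≤ k by omega), if_pos h.le, if_pos h.le,
          show k + 1 - d = (k - d) + 1 by omega, qbinomAt_succ_succ,
          show q ^ (k + 1) = q ^ (k - d + 1) by
            rw [show k + 1 = (k - d + 1) + d by omega, pow_add, hq.pow_eq_one, mul_one]]
        ring

/-- The `q`-Lucas theorem. -/
lemma qbinomAt_lucas {d : ℕ} (hq : IsPrimitiveRoot q d) (a e : ℕ) {b f : ℕ}
    (hb : b < d) (hf : f < d) :
    qbinomAt q (a * d + b) (e * d + f) = (a.choose e : K) * qbinomAt q b f := by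
  have hd : 0 < d := by omega
  induction a generalizing e with
  | zero =>
    cases e with
    | zero => simp
    | succ e =>
      rw [qbinomAt_eq_zero_of_lt]
      · simp
      · rw [add_one_mul]; omega
  | succ a ih =>
    rw [show (a + 1) * d + b = a * d + b + d by ring, qbinomAt_add_order hd hq, ih]
    cases e with
    | zero => simp [hf.not_ge]
    | succ e =>
      rw [if_pos (by rw [add_one_mul]; omega),
        show (e + 1) * d + f - d = e * d + f by rw [add_one_mul]; omega, ih,
        Nat.choose_succ_succ]
      push_cast
      ring

end Gaussian

/-- `qwCoeff` evaluated at `q`. -/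
noncomputable def qwCoeffAt {K : Type*} [Field K] (q : K) (k j : ℕ) : K :=
  Polynomial.eval₂ (Int.castRingHom K) q (qwCoeff k j)

section Coefficients

variable {K : Type*} [Field K] {q : K}

lemma qwCoeffAt_eq (k j : ℕ) : qwCoeffAt q k j =
    qbinomAt q (k - 1) (j - 1) * qbinomAt q (k + j) j -
      qbinomAt q k j * qbinomAt q (k + j) (j - 1) := by
  simp [qwCoeffAt, qwCoeff, qbinomAt, Polynomial.eval₂_sub, Polynomial.eval₂_mul]

lemma qwCoeff_eq_zero_of_lt {k j : ℕ} (hk : 1 ≤ k) (h : k < j) : qwCoeff k j = 0 := by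
  simp [qwCoeff, qbinom_eq_zero_of_lt h, qbinom_eq_zero_of_lt (show k - 1 < j - 1 by omega)]

lemma qwCoeffAt_eq_prod (hq : q ≠ 0) {k : ℕ} (hk : 1 ≤ k) (j : ℕ) :
    qdescAt q j j * qdescAt q (j + 1 : ℕ) (j + 1) * qwCoeffAt q k (j + 1) =
      q ^ (k : ℤ) * (1 - q) *
        ∏ i ∈ Finset.range j, ((1 - q ^ ((k : ℤ) - 1 - i)) * (1 - q ^ ((k : ℤ) + 2 + i))) := by
  obtain ⟨k, rfl⟩ : ∃ l, k = l + 1 := ⟨k - 1, by omega⟩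
  have h1 := qdescAt_self_mul_qbinomAt hq k j
  have h2 := qdescAt_self_mul_qbinomAt hq (k + 1 + (j + 1)) (j + 1)
  have h3 := qdescAt_self_mul_qbinomAt hq (k + 1) (j + 1)
  have h4 := qdescAt_self_mul_qbinomAt hq (k + 1 + (j + 1)) j
  have h5 : qdescAt q ((k + 1 + (j + 1) : ℕ) : ℤ) j =
      ∏ i ∈ Finset.range j, (1 - q ^ (((k + 1 : ℕ) : ℤ) + 2 + i)) := by
    rw [qdescAt, ← Finset.prod_range_reflect]
    refine Finset.prod_congr rfl fun i hi => ?_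
    have hi := Finset.mem_range.1 hi
    congr 2
    omega
  have h6 : qdescAt q (k : ℤ) j =
      ∏ i ∈ Finset.range j, (1 - q ^ (((k + 1 : ℕ) : ℤ) - 1 - i)) := by
    simp [qdescAt]
  have h7 : qdescAt q ((k + 1 : ℕ) : ℤ) (j + 1) = (1 - q ^ ((k : ℤ) + 1)) * qdescAt q k j := by
    rw [Nat.cast_succ, qdescAt_succ_succ]
  have h8 := qdescAt_succ (q := q) ((k + 1 + (j + 1) : ℕ) : ℤ) j
  rw [show (((k + 1 + (j + 1) : ℕ) : ℤ) - j) = (k : ℤ) + 1 + 1 by push_cast; ring,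
    zpow_add₀ hq _ 1, zpow_one] at h8
  rw [Finset.prod_mul_distrib, ← h5, ← h6, qwCoeffAt_eq]
  simp only [Nat.add_sub_cancel]
  rw [h7] at h3
  rw [h8] at h2
  push_cast at *
  linear_combination (qdescAt q (j + 1) (j + 1) * qbinomAt q (k + 1 + (j + 1)) (j + 1)) * h1
    + qdescAt q k j * h2 -
    (qdescAt q j j * qbinomAt q (k + 1 + (j + 1)) j) * h3 -
    (1 - q ^ ((k : ℤ) + 1)) * qdescAt q k j * h4

lemma zpow_eq_of_modEq {d : ℕ} (hq : IsPrimitiveRoot q d) (hq0 : q ≠ 0) {a b : ℤ}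
    (h : (d : ℤ) ∣ a - b) : q ^ a = q ^ b := by
  obtain ⟨c, hc⟩ := h
  rw [show a = b + d * c by omega, zpow_add₀ hq0, zpow_mul, zpow_natCast, hq.pow_eq_one,
    one_zpow, mul_one]

/-- The reflection `k ↦ d - 1 - k` for indices below the order of `q`. -/
lemma qwCoeffAt_reflect_of_lt {d : ℕ} (hq : IsPrimitiveRoot q d) {k k' j : ℕ} (hk : 1 ≤ k)
    (hk' : 1 ≤ k') (hkk : k + k' + 1 = d) (hj : 1 ≤ j) (hjd : j < d) :
    qwCoeffAt q k j = q ^ ((2 * (k : ℤ) + 1) * j) * qwCoeffAt q k' j := by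
  have hq0 : q ≠ 0 := hq.ne_zero (by omega)
  obtain ⟨j, rfl⟩ : ∃ l, j = l + 1 := ⟨j - 1, by omega⟩
  have hne : qdescAt q j j * qdescAt q (j + 1 : ℕ) (j + 1) ≠ 0 :=
    mul_ne_zero (qdescAt_self_ne_zero hq (by omega)) (qdescAt_self_ne_zero hq hjd)
  apply mul_left_cancel₀ hne
  rw [mul_left_comm, qwCoeffAt_eq_prod hq0 hk, qwCoeffAt_eq_prod hq0 hk']
  have hfac : ∀ i : ℕ, (1 - q ^ ((k : ℤ) - 1 - i)) * (1 - q ^ ((k : ℤ) + 2 + i)) =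
      q ^ (2 * (k : ℤ) + 1) *
        ((1 - q ^ ((k' : ℤ) - 1 - i)) * (1 - q ^ ((k' : ℤ) + 2 + i))) := by
    intro i
    have e1 : q ^ ((k' : ℤ) - 1 - i) = q ^ (-((k : ℤ) + 2 + i)) :=
      zpow_eq_of_modEq hq hq0 ⟨1, by omega⟩
    have e2 : q ^ ((k' : ℤ) + 2 + i) = q ^ (-((k : ℤ) - 1 - i)) :=
      zpow_eq_of_modEq hq hq0 ⟨1, by omega⟩
    have e3 : q ^ (2 * (k : ℤ) + 1) = q ^ ((k : ℤ) + 2 + i) * q ^ ((k : ℤ) - 1 - i) := by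
      rw [← zpow_add₀ hq0]
      congr 1
      ring
    rw [e1, e2, e3, zpow_neg, zpow_neg]
    have n1 := zpow_ne_zero ((k : ℤ) + 2 + i) hq0
    have n2 := zpow_ne_zero ((k : ℤ) - 1 - i) hq0
    generalize q ^ ((k : ℤ) + 2 + i) = y at n1 ⊢
    generalize q ^ ((k : ℤ) - 1 - i) = z at n2 ⊢
    field_simp
    ring
  simp_rw [hfac]
  rw [Finset.prod_mul_distrib, Finset.prod_const, Finset.card_range, ← zpow_natCast (q ^ _),
    ← zpow_mul, Nat.cast_succ, mul_add, zpow_add₀ hq0 _ (_ * 1)]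
  have e3 : q ^ (k : ℤ) = q ^ ((2 * (k : ℤ) + 1) * 1) * q ^ (k' : ℤ) := by
    rw [← zpow_add₀ hq0]
    exact zpow_eq_of_modEq hq hq0 ⟨-1, by omega⟩
  rw [e3]
  ring

lemma qwCoeffAt_lucas {d : ℕ} (hq : IsPrimitiveRoot q d) (a e : ℕ) {k f : ℕ} (hk : 1 ≤ k)
    (hkd : k + 1 < d) (hf : 1 ≤ f) (hfd : f < d) :
    qwCoeffAt q (a * d + k) (e * d + f) =
      (a.choose e * (a + e).choose e : K) * qwCoeffAt q k f := by
  rw [qwCoeffAt_eq, qwCoeffAt_eq, show a * d + k - 1 = a * d + (k - 1) by omega,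
    show e * d + f - 1 = e * d + (f - 1) by omega,
    qbinomAt_lucas hq a e (show k - 1 < d by omega) (show f - 1 < d by omega),
    qbinomAt_lucas hq a e (show k < d by omega) hfd]
  rcases lt_or_ge (k + f) d with h | h
  · rw [show a * d + k + (e * d + f) = (a + e) * d + (k + f) by ring,
      qbinomAt_lucas hq _ _ h hfd, qbinomAt_lucas hq _ _ h (show f - 1 < d by omega)]
    ring
  · obtain ⟨s, hs⟩ := Nat.exists_eq_add_of_le h
    rw [show a * d + k + (e * d + f) = (a + e + 1) * d + s by linear_combination hs, hs,
      qbinomAt_lucas hq _ _ (show s < d by omega) hfd,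
      qbinomAt_lucas hq _ _ (show s < d by omega) (show f - 1 < d by omega),
      show d + s = 1 * d + s by ring, show qbinomAt q (1 * d + s) f =
        qbinomAt q (1 * d + s) (0 * d + f) by simp,
      show qbinomAt q (1 * d + s) (f - 1) = qbinomAt q (1 * d + s) (0 * d + (f - 1)) by simp,
      qbinomAt_lucas hq _ _ (show s < d by omega) hfd,
      qbinomAt_lucas hq _ _ (show s < d by omega) (show f - 1 < d by omega),
      qbinomAt_eq_zero_of_lt (show s < f by omega),
      qbinomAt_eq_zero_of_lt (show s < f - 1 by omega)]
    ring

lemma qwCoeffAt_mul_order {d : ℕ} (hq : IsPrimitiveRoot q d) (a e : ℕ) {k : ℕ} (hk : 1 ≤ k)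
    (hkd : k + 1 < d) : qwCoeffAt q (a * d + k) ((e + 1) * d) = 0 := by
  have h1 : qbinomAt q (a * d + k - 1) ((e + 1) * d - 1) = 0 := by
    rw [show a * d + k - 1 = a * d + (k - 1) by omega,
      show (e + 1) * d - 1 = e * d + (d - 1) by rw [add_one_mul]; omega,
      qbinomAt_lucas hq a e (show k - 1 < d by omega) (show d - 1 < d by omega),
      qbinomAt_eq_zero_of_lt (show k - 1 < d - 1 by omega), mul_zero]
  have h2 : qbinomAt q (a * d + k + (e + 1) * d) ((e + 1) * d - 1) = 0 := by
    rw [show a * d + k + (e + 1) * d = (a + e + 1) * d + k by ring,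
      show (e + 1) * d - 1 = e * d + (d - 1) by rw [add_one_mul]; omega,
      qbinomAt_lucas hq _ e (show k < d by omega) (show d - 1 < d by omega),
      qbinomAt_eq_zero_of_lt (show k < d - 1 by omega), mul_zero]
  rw [qwCoeffAt_eq, h1, h2]
  ring

lemma qwCoeffAt_reflect {d : ℕ} (hq : IsPrimitiveRoot q d) (a : ℕ) {k k' j : ℕ} (hk : 1 ≤ k)
    (hk' : 1 ≤ k') (hkk : k + k' + 1 = d) (hj : 1 ≤ j) :
    qwCoeffAt q (a * d + k) j =
      q ^ ((2 * (k : ℤ) + 1) * j) * qwCoeffAt q (a * d + k') j := by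
  have hq0 : q ≠ 0 := hq.ne_zero (by omega)
  have hjd := Nat.div_add_mod' j d
  have hlt := Nat.mod_lt j (show d > 0 by omega)
  generalize j / d = e at hjd
  generalize j % d = f at hjd hlt
  subst hjd
  rcases Nat.eq_zero_or_pos f with rfl | hf
  · cases e with
    | zero => simp at hj
    | succ e =>
      rw [add_zero, qwCoeffAt_mul_order hq a e hk (by omega),
        qwCoeffAt_mul_order hq a e hk' (by omega), mul_zero]
  · rw [qwCoeffAt_lucas hq a e hk (by omega) hf hlt, qwCoeffAt_lucas hq a e hk' (by omega) hf hlt,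
      qwCoeffAt_reflect_of_lt hq hk hk' hkk hf hlt,
      zpow_eq_of_modEq hq hq0 (a := (2 * (k : ℤ) + 1) * (e * d + f : ℕ))
        (b := (2 * (k : ℤ) + 1) * f) ⟨(2 * (k : ℤ) + 1) * e, by push_cast; ring⟩]
    ring

end Coefficients

section Evaluation

variable {K : Type*} [Field K]

lemma one_sub_mul_eval_qintL (u : Kˣ) (m : ℕ) :
    (1 - (u : K)) * LaurentPolynomial.eval₂ (Int.castRingHom K) u (qintL m) = 1 - (u : K) ^ m := by
  rw [qintL, LaurentPolynomial.eval₂_toLaurent, qint, Polynomial.eval₂_finsetSum]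
  simp only [Polynomial.eval₂_X_pow]
  exact mul_neg_geom_sum _ _

lemma eval_qintL_congr {u : Kˣ} {d : ℕ} (hu : IsPrimitiveRoot (u : K) d) (hd : 1 < d) {a b : ℕ}
    (h : a ≡ b [MOD d]) :
    LaurentPolynomial.eval₂ (Int.castRingHom K) u (qintL a) =
      LaurentPolynomial.eval₂ (Int.castRingHom K) u (qintL b) := by
  have h1 : 1 - (u : K) ≠ 0 := sub_ne_zero.2 (hu.ne_one hd).symm
  apply mul_left_cancel₀ h1
  rw [one_sub_mul_eval_qintL, one_sub_mul_eval_qintL, ← pow_mod_orderOf, ← hu.eq_orderOf, h,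
    hu.eq_orderOf, pow_mod_orderOf]

lemma eval_qintL_eq_zero {u : Kˣ} {d : ℕ} (hu : IsPrimitiveRoot (u : K) d) (hd : 1 < d) {a : ℕ}
    (h : d ∣ a) : LaurentPolynomial.eval₂ (Int.castRingHom K) u (qintL a) = 0 := by
  rw [eval_qintL_congr hu hd (Nat.modEq_zero_iff_dvd.2 h)]
  simp [qintL, qint]

lemma map_qw (u : Kˣ) {α k M : ℕ} (hα : 1 ≤ α) (hk : 1 ≤ k) (hM : k ≤ M) :
    (qw α k).map (LaurentPolynomial.eval₂ (Int.castRingHom K) u) =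
      ∑ j ∈ Finset.Icc 1 M, Polynomial.C
        ((u : K) ^ ((α : ℤ) * (((j + 1).choose 2 : ℤ) - ((k : ℤ) + 1) * ((j : ℤ) - 1))) *
          qwCoeffAt (u : K) k j ^ α) * Polynomial.X ^ (j - 1) := by
  rw [qw, Polynomial.map_sum]
  refine (Finset.sum_congr rfl fun j _ => ?_).trans
    (Finset.sum_subset (Finset.Icc_subset_Icc_right hM) fun j hj hj' => ?_)
  · simp only [Polynomial.map_mul, Polynomial.map_C, Polynomial.map_pow, Polynomial.map_X, map_mul,
      map_pow, LaurentPolynomial.eval₂_T, LaurentPolynomial.eval₂_toLaurent, qwCoeffAt,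
      Units.val_zpow_eq_zpow_val]
  · have hlt : k < j := by
      simp only [Finset.mem_Icc] at hj hj'
      omega
    simp [qwCoeffAt, qwCoeff_eq_zero_of_lt hk hlt, show α ≠ 0 by omega]

lemma map_qw_reflect {u : Kˣ} {d : ℕ} (hu : IsPrimitiveRoot (u : K) d) {α : ℕ} (hα : 1 ≤ α)
    (a : ℕ) {k k' : ℕ} (hk : 1 ≤ k) (hk' : 1 ≤ k') (hkk : k + k' + 1 = d) :
    (qw α (a * d + k)).map (LaurentPolynomial.eval₂ (Int.castRingHom K) u) =
      Polynomial.C ((u : K) ^ ((α : ℤ) * (2 * k + 1))) *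
        (qw α (a * d + k')).map (LaurentPolynomial.eval₂ (Int.castRingHom K) u) := by
  have hq0 : (u : K) ≠ 0 := u.ne_zero
  rw [map_qw u hα (show 1 ≤ a * d + k by omega) (show a * d + k ≤ a * d + d by omega),
    map_qw u hα (show 1 ≤ a * d + k' by omega) (show a * d + k' ≤ a * d + d by omega),
    Finset.mul_sum]
  refine Finset.sum_congr rfl fun j hj => ?_
  have hj := (Finset.mem_Icc.1 hj).1
  rw [qwCoeffAt_reflect hu a hk hk' hkk hj, mul_pow, ← mul_assoc, ← mul_assoc,
    ← Polynomial.C_mul, ← mul_assoc, ← zpow_natCast (_ ^ (_ : ℤ)), ← zpow_mul, ← zpow_add₀ hq0,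
    ← zpow_add₀ hq0]
  congr 3
  refine zpow_eq_of_modEq hu hq0 ⟨α * (j - 1), ?_⟩
  subst hkk
  push_cast
  ring

lemma prod_map_qw_reflect {u : Kˣ} {d : ℕ} (hu : IsPrimitiveRoot (u : K) d) {α : ℕ}
    (hα : 1 ≤ α) (m a N : ℕ) {k k' : ℕ} (hk : 1 ≤ k) (hk' : 1 ≤ k') (hkk : k + k' + N = d) :
    ∏ i ∈ Finset.range N,
        (qw α (a * d + k + i)).map (LaurentPolynomial.eval₂ (Int.castRingHom K) u) ^ m =
      Polynomial.C ((u : K) ^ ((N * α * m : ℤ) * (2 * k + N))) *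
        ∏ i ∈ Finset.range N,
          (qw α (a * d + k' + i)).map (LaurentPolynomial.eval₂ (Int.castRingHom K) u) ^ m := by
  have hq0 : (u : K) ≠ 0 := u.ne_zero
  have hexp : ∀ M : ℕ, ∏ i ∈ Finset.range M,
      Polynomial.C ((u : K) ^ ((α : ℤ) * (2 * (k + i : ℕ) + 1))) ^ m =
        Polynomial.C ((u : K) ^ ((M * α * m : ℤ) * (2 * k + M))) := by
    intro M
    induction M with
    | zero => simp
    | succ M ih =>
      rw [Finset.prod_range_succ, ih, ← Polynomial.C_pow, ← Polynomial.C_mul,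
        ← zpow_natCast (_ ^ (_ : ℤ)), ← zpow_mul, ← zpow_add₀ hq0]
      congr 2
      push_cast
      ring
  rw [← hexp N, ← Finset.prod_range_reflect (fun i => (qw α (a * d + k' + i)).map _ ^ m),
    ← Finset.prod_mul_distrib]
  refine Finset.prod_congr rfl fun i hi => ?_
  have hi := Finset.mem_range.1 hi
  rw [add_assoc, map_qw_reflect hu hα a (show 1 ≤ k + i by omega)
    (show 1 ≤ k' + (N - 1 - i) by omega) (by omega), mul_pow, add_assoc]

end Evaluation

lemma ascFactorial_mul_reflect_modEq {d K K' β : ℕ} (h : d ∣ K + K' + 2 * β) :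
    K.ascFactorial β * (K + β + 1).ascFactorial β ≡
      K'.ascFactorial β * (K' + β + 1).ascFactorial β [MOD d] := by
  have key : ∀ K K' : ℕ, d ∣ K + K' + 2 * β →
      (((K + β + 1).ascFactorial β : ℕ) : ZMod d) = (-1) ^ β * (K'.ascFactorial β : ℕ) := by
    intro K K' h
    have h0 : ((K + K' + 2 * β : ℕ) : ZMod d) = 0 := (ZMod.natCast_eq_zero_iff _ _).2 h
    push_cast at h0
    rw [Nat.ascFactorial_eq_prod_range, Nat.ascFactorial_eq_prod_range, Nat.cast_prod,
      Nat.cast_prod, ← Finset.prod_range_reflect, Finset.pow_eq_prod_const,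
      ← Finset.prod_mul_distrib]
    refine Finset.prod_congr rfl fun i hi => ?_
    have hi := Finset.mem_range.1 hi
    obtain ⟨s, hs⟩ : ∃ s, β = s + 1 + i := ⟨β - 1 - i, by omega⟩
    rw [show β - 1 - i = s by omega]
    subst hs
    push_cast at h0 ⊢
    linear_combination h0
  rw [← ZMod.natCast_eq_natCast_iff]
  push_cast
  have h1 := key K K' h
  have h2 := key K' K (by rwa [add_comm K' K])
  have h3 : ((-1 : ZMod d) ^ β) ^ 2 = 1 := by rw [← pow_mul, mul_comm, pow_mul]; simp
  rw [h1, h2]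
  ring

lemma dvd_ascFactorial {d K i β : ℕ} (hi : i < β) (h : d ∣ K + i) : d ∣ K.ascFactorial β := by
  rw [Nat.ascFactorial_eq_prod_range]
  exact h.trans (Finset.dvd_prod_of_mem _ (Finset.mem_range.2 hi))

/-- The `k`-th summand, as a polynomial in `x`. -/
noncomputable def qsummand (α β m n r k : ℕ) : Polynomial (LaurentPolynomial ℤ) :=
  Polynomial.C ((qintL (k.ascFactorial β * (k + β + 1).ascFactorial β)) ^ r *
      qintL (2 * (k + β)) *
      LaurentPolynomial.T (((n : ℤ) - 2 * β - k) * (2 * β * α * m + 1))) *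
    ∏ i ∈ Finset.range (2 * β), (qw α (k + i)) ^ m

section Summand

variable {K : Type*} [Field K] {u : Kˣ} {d : ℕ}

lemma map_qsummand (u : Kˣ) (α β m n r k : ℕ) :
    (qsummand α β m n r k).map (LaurentPolynomial.eval₂ (Int.castRingHom K) u) =
      Polynomial.C ((LaurentPolynomial.eval₂ (Int.castRingHom K) u
          (qintL (k.ascFactorial β * (k + β + 1).ascFactorial β))) ^ r *
        LaurentPolynomial.eval₂ (Int.castRingHom K) u (qintL (2 * (k + β))) *
        (u : K) ^ (((n : ℤ) - 2 * β - k) * (2 * β * α * m + 1))) *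
      ∏ i ∈ Finset.range (2 * β),
        (qw α (k + i)).map (LaurentPolynomial.eval₂ (Int.castRingHom K) u) ^ m := by
  simp only [qsummand, Polynomial.map_mul, Polynomial.map_C, map_mul, map_pow,
    LaurentPolynomial.eval₂_T, Polynomial.map_prod, Polynomial.map_pow,
    Units.val_zpow_eq_zpow_val]

lemma map_qsummand_eq_zero_of_dvd (hu : IsPrimitiveRoot (u : K) d) (hd : 1 < d)
    {α β m n r k : ℕ} (hr : 1 ≤ r) {t : ℕ} (ht : t ≤ 2 * β) (h : d ∣ k + t) :
    (qsummand α β m n r k).map (LaurentPolynomial.eval₂ (Int.castRingHom K) u) = 0 := by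
  rw [map_qsummand]
  rcases lt_trichotomy t β with h1 | rfl | h1
  · rw [eval_qintL_eq_zero hu hd (Dvd.dvd.mul_right (dvd_ascFactorial h1 h) _)]
    simp [show r ≠ 0 by omega]
  · rw [eval_qintL_eq_zero hu hd (a := 2 * (k + t)) (Dvd.dvd.mul_left h _)]
    simp
  · rw [eval_qintL_eq_zero hu hd (Dvd.dvd.mul_left
      (dvd_ascFactorial (i := t - β - 1) (show t - β - 1 < β by omega)
        (by rwa [show k + β + 1 + (t - β - 1) = k + t by omega])) _)]
    simp [show r ≠ 0 by omega]

lemma map_qsummand_reflect (hu : IsPrimitiveRoot (u : K) d) (hd : 1 < d)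
    {α β m n r : ℕ} (hα : 1 ≤ α) (hn : d ∣ n) (a : ℕ) {k k' : ℕ} (hk : 1 ≤ k) (hk' : 1 ≤ k')
    (hkk : k + k' + 2 * β = d) :
    (qsummand α β m n r (a * d + k)).map (LaurentPolynomial.eval₂ (Int.castRingHom K) u) +
      (qsummand α β m n r (a * d + k')).map (LaurentPolynomial.eval₂ (Int.castRingHom K) u) =
        0 := by
  have hq0 : (u : K) ≠ 0 := u.ne_zero
  have h1 : 1 - (u : K) ≠ 0 := sub_ne_zero.2 (hu.ne_one hd).symm
  rw [map_qsummand, map_qsummand, prod_map_qw_reflect hu hα m a (2 * β) hk hk' hkk,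
    eval_qintL_congr hu hd (ascFactorial_mul_reflect_modEq (K := a * d + k) (K' := a * d + k')
      ⟨2 * a + 1, by linear_combination hkk⟩), ← mul_assoc, ← add_mul, ← Polynomial.C_mul,
    ← Polynomial.C_add]
  refine mul_eq_zero_of_left (Polynomial.C_eq_zero.2 (mul_left_cancel₀ h1 ?_)) _
  have g1 := one_sub_mul_eval_qintL u (2 * (a * d + k + β))
  have g2 := one_sub_mul_eval_qintL u (2 * (a * d + k' + β))
  generalize LaurentPolynomial.eval₂ (Int.castRingHom K) u (qintL (2 * (a * d + k + β))) = y at *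
  generalize LaurentPolynomial.eval₂ (Int.castRingHom K) u (qintL (2 * (a * d + k' + β))) = z at *
  generalize LaurentPolynomial.eval₂ (Int.castRingHom K) u _ ^ r = A
  obtain ⟨N, rfl⟩ := hn
  suffices h : (1 - (u : K) ^ (2 * (a * d + k + β))) *
      (u : K) ^ (((d * N : ℕ) - 2 * (β : ℤ) - (a * d + k : ℕ)) * (2 * β * α * m + 1)) *
        (u : K) ^ (((2 * β : ℕ) * α * m : ℤ) * (2 * k + (2 * β : ℕ))) +
      (1 - (u : K) ^ (2 * (a * d + k' + β))) *
      (u : K) ^ (((d * N : ℕ) - 2 * (β : ℤ) - (a * d + k' : ℕ)) * (2 * β * α * m + 1)) = 0 by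
    rw [← g1, ← g2] at h
    linear_combination A * h
  have e1 : (u : K) ^ (2 * (a * d + k + β)) = (u : K) ^ (2 * ((k : ℤ) + β)) := by
    rw [← zpow_natCast]
    exact zpow_eq_of_modEq hu hq0 ⟨2 * a, by push_cast; ring⟩
  have e2 : (u : K) ^ (2 * (a * d + k' + β)) = (u : K) ^ (-2 * ((k : ℤ) + β)) := by
    rw [← zpow_natCast]
    exact zpow_eq_of_modEq hu hq0 ⟨2 * a + 2, by subst hkk; push_cast; ring⟩
  have e3 : (u : K) ^ (((d * N : ℕ) - 2 * (β : ℤ) - (a * d + k : ℕ)) * (2 * β * α * m + 1)) =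
      (u : K) ^ ((-2 * (β : ℤ) - k) * (2 * β * α * m + 1)) :=
    zpow_eq_of_modEq hu hq0 ⟨(N - a) * (2 * β * α * m + 1), by push_cast; ring⟩
  have e4 : (u : K) ^ (((d * N : ℕ) - 2 * (β : ℤ) - (a * d + k' : ℕ)) * (2 * β * α * m + 1)) =
      (u : K) ^ ((k : ℤ) * (2 * β * α * m + 1)) :=
    zpow_eq_of_modEq hu hq0 ⟨(N - a - 1) * (2 * β * α * m + 1), by subst hkk; push_cast; ring⟩
  rw [e1, e2, e3, e4, mul_assoc, ← zpow_add₀ hq0, one_sub_mul, one_sub_mul,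
    ← zpow_add₀ hq0, ← zpow_add₀ hq0]
  push_cast
  rw [show (2 * ((k : ℤ) + β) + ((-2 * β - k) * (2 * β * α * m + 1) +
      2 * β * α * m * (2 * k + 2 * β))) = k * (2 * β * α * m + 1) by ring,
    show ((-2 * (β : ℤ) - k) * (2 * β * α * m + 1) + 2 * β * α * m * (2 * k + 2 * β)) =
      -2 * (k + β) + k * (2 * β * α * m + 1) by ring]
  ring

lemma map_sum_qsummand_eq_zero (hu : IsPrimitiveRoot (u : K) d) (hd : 1 < d)
    {α β m n r : ℕ} (hα : 1 ≤ α) (hr : 1 ≤ r) (hn : d ∣ n) :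
    (∑ k ∈ Finset.range n, qsummand α β m n r k).map
      (LaurentPolynomial.eval₂ (Int.castRingHom K) u) = 0 := by
  rw [Polynomial.map_sum]
  obtain ⟨N, hN⟩ := hn
  have hd0 : 0 < d := by omega
  let g : ℕ → ℕ := fun k => if 1 ≤ k % d ∧ k % d + 2 * β < d then
    k / d * d + (d - 2 * β - k % d) else k
  have hzero : ∀ k, ¬ (1 ≤ k % d ∧ k % d + 2 * β < d) →
      (qsummand α β m n r k).map (LaurentPolynomial.eval₂ (Int.castRingHom K) u) = 0 := by
    intro k hk
    by_cases h0 : k % d = 0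
    · exact map_qsummand_eq_zero_of_dvd hu hd hr (t := 0) (by omega) (Nat.dvd_of_mod_eq_zero h0)
    · refine map_qsummand_eq_zero_of_dvd hu hd hr (t := d - k % d) (by omega) ⟨k / d + 1, ?_⟩
      have h2 := Nat.div_add_mod k d
      have h3 := Nat.mod_lt k hd0
      rw [mul_add, mul_one]
      omega
  have hdiv : ∀ k, (1 ≤ k % d ∧ k % d + 2 * β < d) →
      g k / d = k / d ∧ g k % d = d - 2 * β - k % d := by
    intro k hk
    simp only [g, if_pos hk]
    rw [Nat.div_mod_unique hd0]
    exact ⟨by ring, by omega⟩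
  refine Finset.sum_involution (fun k _ => g k) ?_ ?_ ?_ ?_
  · intro k _
    by_cases hk : 1 ≤ k % d ∧ k % d + 2 * β < d
    · have h := map_qsummand_reflect hu hd (β := β) (m := m) (r := r) hα ⟨N, hN⟩ (k / d) hk.1
        (show 1 ≤ d - 2 * β - k % d by omega) (by omega)
      rw [Nat.div_add_mod'] at h
      simpa only [g, if_pos hk] using h
    · simp only [g, if_neg hk, hzero k hk, add_zero]
  · intro k _ hne hfix
    have hk : 1 ≤ k % d ∧ k % d + 2 * β < d := by
      by_contra h
      exact hne (hzero k h)
    have h1 := (hdiv k hk).2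
    rw [hfix] at h1
    have h1' : 2 * (k % d) + 2 * β = d := by omega
    refine hne ?_
    rw [map_qsummand, eval_qintL_eq_zero hu hd (a := 2 * (k + β)) ⟨2 * (k / d) + 1, ?_⟩]
    · simp
    · have h3 := Nat.div_add_mod k d
      linear_combination h1' - 2 * h3
  · intro k hkn
    have hkn := Finset.mem_range.1 hkn
    refine Finset.mem_range.2 ?_
    by_cases hk : 1 ≤ k % d ∧ k % d + 2 * β < d
    · rw [hN, mul_comm, ← Nat.div_lt_iff_lt_mul hd0, (hdiv k hk).1, Nat.div_lt_iff_lt_mul hd0,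
        mul_comm, ← hN]
      exact hkn
    · simpa only [g, if_neg hk] using hkn
  · intro k _
    by_cases hk : 1 ≤ k % d ∧ k % d + 2 * β < d
    · obtain ⟨h1, h2⟩ := hdiv k hk
      have hk' : 1 ≤ g k % d ∧ g k % d + 2 * β < d := by omega
      obtain ⟨h3, h4⟩ := hdiv (g k) hk'
      change g (g k) = k
      rw [← Nat.div_add_mod (g (g k)) d, h3, h4, h1, h2,
        show d - 2 * β - (d - 2 * β - k % d) = k % d by omega, Nat.div_add_mod]
    · simp only [g, if_neg hk]

end Summand

lemma qint_dvd_of_eval_eq_zero {n : ℕ} (hn : 1 ≤ n) {p : Polynomial ℤ}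
    (h : ∀ z : ℂ, z ^ n = 1 → z ≠ 1 → p.eval₂ (Int.castRingHom ℂ) z = 0) : qint n ∣ p := by
  have hgeom : qint n * (Polynomial.X - 1) = Polynomial.X ^ n - 1 := by
    rw [qint]
    exact geom_sum_mul _ _
  have hX : (Polynomial.X - 1 : Polynomial ℤ) ≠ 0 := by
    simpa using Polynomial.X_sub_C_ne_zero (1 : ℤ)
  refine (mul_dvd_mul_iff_right hX).1 ?_
  have hmonic : (Polynomial.X ^ n - 1 : Polynomial ℤ).Monic := by
    simpa using Polynomial.monic_X_pow_sub_C (1 : ℤ) (by omega : n ≠ 0)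
  rw [hgeom, ← Polynomial.map_dvd_map (Int.castRingHom ℂ) Int.cast_injective hmonic]
  simp only [Polynomial.map_sub, Polynomial.map_mul, Polynomial.map_pow, Polynomial.map_X,
    Polynomial.map_one]
  rw [X_pow_sub_one_eq_prod hn (Complex.isPrimitiveRoot_exp n (by omega))]
  refine Finset.prod_dvd_of_coprime
    (fun a _ b _ hab => Polynomial.pairwise_coprime_X_sub_C Function.injective_id hab)
    fun z hz => ?_
  rw [Polynomial.dvd_iff_isRoot, Polynomial.IsRoot]
  rw [Polynomial.mem_nthRootsFinset hn] at hz
  by_cases h1 : z = 1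
  · simp [h1]
  · simp [Polynomial.eval_map, h z hz h1]

lemma qintL_dvd_of_eval_eq_zero {n : ℕ} (hn : 1 ≤ n) {p : LaurentPolynomial ℤ}
    (h : ∀ u : ℂˣ, (u : ℂ) ^ n = 1 → (u : ℂ) ≠ 1 →
      LaurentPolynomial.eval₂ (Int.castRingHom ℂ) u p = 0) : qintL n ∣ p := by
  obtain ⟨N, f, hf⟩ := p.exists_T_pow
  have hdvd : qint n ∣ f := by
    refine qint_dvd_of_eval_eq_zero hn fun z hz hz1 => ?_
    have hz0 : z ≠ 0 := by
      rintro rfl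
      simp [show n ≠ 0 by omega] at hz
    have h1 := LaurentPolynomial.eval₂_toLaurent (Int.castRingHom ℂ) (Units.mk0 z hz0) f
    rw [hf, map_mul, h (Units.mk0 z hz0) hz hz1, zero_mul] at h1
    exact h1.symm
  rw [← (LaurentPolynomial.isUnit_T (R := ℤ) N).dvd_mul_right, ← hf]
  exact map_dvd Polynomial.toLaurent hdvd

/-- For all positive integers `α, β, m, n, r`,
`∑_{k=0}^{n-1} [(k)_β (k+β+1)_β]^r [2(k+β)] q^{(n-2β-k)(2βαm+1)}
∏_{i=0}^{2β-1} w_{k+i}^{(α)}(x;q)^m ≡ 0 (mod [n])`,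
where `(k)_β = k(k+1)⋯(k+β−1)` is the rising factorial. -/
theorem qint_dvd_sum_prod_general (α β m n r : ℕ)
    (hα : 1 ≤ α) (hβ : 1 ≤ β) (hm : 1 ≤ m) (hn : 1 ≤ n) (hr : 1 ≤ r) :
    (Polynomial.C (qintL n) : Polynomial (LaurentPolynomial ℤ)) ∣
      ∑ k ∈ Finset.range n,
        Polynomial.C ((qintL (k.ascFactorial β * (k + β + 1).ascFactorial β)) ^ r *
            qintL (2 * (k + β)) *
            LaurentPolynomial.T (((n : ℤ) - 2 * β - k) * (2 * β * α * m + 1))) *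
          ∏ i ∈ Finset.range (2 * β), (qw α (k + i)) ^ m := by
  change _ ∣ ∑ k ∈ Finset.range n, qsummand α β m n r k
  rw [Polynomial.C_dvd_iff_dvd_coeff]
  refine fun j => qintL_dvd_of_eval_eq_zero hn fun u hu hu1 => ?_
  have hord : orderOf (u : ℂ) ∣ n := orderOf_dvd_of_pow_eq_one hu
  have hd : 1 < orderOf (u : ℂ) := by
    have h0 := Nat.pos_of_dvd_of_pos hord hn
    have h1 : orderOf (u : ℂ) ≠ 1 := fun h => hu1 (orderOf_eq_one_iff.1 h)
    omega
  have h := map_sum_qsummand_eq_zero (IsPrimitiveRoot.orderOf (u : ℂ)) hd (β := β) (m := m) hα hr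
    hord
  rw [← Polynomial.coeff_map, h, Polynomial.coeff_zero]
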